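/- Let m, k, n be natural numbers, let u : Fin n → ℝ^m and v : Fin n → ℝ^k be orthonormal families, let δ : Fin n → ℝ, and let Y = ∑ⱼ δⱼ · (uⱼ vⱼᵀ). Then for every w : Fin n → ℝ and every σ : Fin n → ℝ, (1/2)‖Y − ∑ⱼ σⱼ · (uⱼ vⱼᵀ)‖_F² + ∑ⱼ wⱼ·σⱼ = ∑ⱼ [(1/2)(δⱼ − σⱼ)² + wⱼ·σⱼ]; that is, over matrices sharing the singular vectors of Y, the weighted nuclear norm minimization objective decouples into the sum of independent scalar problems min_{σⱼ} (1/2)(δⱼ − σⱼ)² + wⱼ σⱼ. (The reduction underlying Theorem 5.) -/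

import Mathlib

/-!
The rank-one matrices `uⱼ vⱼᵀ` satisfy `⟨uₐ vₐᵀ, u_b v_bᵀ⟩_F = ⟨uₐ, u_b⟩ ⟨vₐ, v_b⟩`, hence are
orthonormal for the Frobenius inner product. Since `Y - ∑ⱼ σⱼ uⱼ vⱼᵀ = ∑ⱼ (δⱼ - σⱼ) uⱼ vⱼᵀ`, the
Pythagorean identity `frobSq_sum_smul_vecMulVec` turns its squared norm into `∑ⱼ (δⱼ - σⱼ)²`.
-/

open Finset Matrix

/-- Squared Frobenius norm of a real matrix: the sum of squares of its entries. -/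
def frobSq {m k : ℕ} (M : Matrix (Fin m) (Fin k) ℝ) : ℝ := ∑ i, ∑ l, (M i l)^2

/-- Pythagoras for the rank-one matrices `uⱼ vⱼᵀ`, which are orthonormal for the Frobenius inner
product. -/
theorem frobSq_sum_smul_vecMulVec {m k n : ℕ}
    {u : Fin n → EuclideanSpace ℝ (Fin m)} {v : Fin n → EuclideanSpace ℝ (Fin k)}
    (hu : Orthonormal ℝ u) (hv : Orthonormal ℝ v) (c : Fin n → ℝ) :
    frobSq (∑ j, c j • Matrix.vecMulVec (u j) (v j)) = ∑ j, c j ^ 2 := by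
  have hu' : ∀ a b, ∑ i, u a i * u b i = if a = b then 1 else 0 := fun a b => by
    rw [← orthonormal_iff_ite.mp hu a b, PiLp.inner_apply]
    exact Finset.sum_congr rfl fun i _ => by simp [mul_comm]
  have hv' : ∀ a b, ∑ l, v a l * v b l = if a = b then 1 else 0 := fun a b => by
    rw [← orthonormal_iff_ite.mp hv a b, PiLp.inner_apply]
    exact Finset.sum_congr rfl fun i _ => by simp [mul_comm]
  calc frobSq (∑ j, c j • Matrix.vecMulVec (u j) (v j))
      = ∑ i, ∑ l, ∑ a, ∑ b, c a * c b * ((u a i * u b i) * (v a l * v b l)) := by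
        unfold frobSq
        refine Finset.sum_congr rfl fun i _ => Finset.sum_congr rfl fun l _ => ?_
        rw [Matrix.sum_apply, sq, Finset.sum_mul_sum]
        refine Finset.sum_congr rfl fun a _ => Finset.sum_congr rfl fun b _ => ?_
        simp only [Matrix.smul_apply, Matrix.vecMulVec_apply, smul_eq_mul]
        ring
    _ = ∑ a, ∑ b, ∑ i, ∑ l, c a * c b * ((u a i * u b i) * (v a l * v b l)) := by
        simp_rw [Finset.sum_comm (s := (Finset.univ : Finset (Fin k)))]
        rw [Finset.sum_comm]
        exact Finset.sum_congr rfl fun a _ => Finset.sum_comm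
    _ = ∑ a, ∑ b, c a * c b * ((∑ i, u a i * u b i) * ∑ l, v a l * v b l) := by
        simp_rw [Finset.sum_mul_sum, Finset.mul_sum]
    _ = ∑ j, c j ^ 2 := by
        simp [hu', hv', sq]

/-- The reduction underlying Theorem 5: over matrices sharing the singular vectors
of `Y = ∑ⱼ δⱼ uⱼ vⱼᵀ`, the weighted nuclear norm minimization objective decouples
into the sum of independent scalar problems `min_{σⱼ} (1/2)(δⱼ − σⱼ)² + wⱼ σⱼ`. -/
theorem wnnm_objective_decouples (m k n : ℕ)
    (u : Fin n → EuclideanSpace ℝ (Fin m)) (v : Fin n → EuclideanSpace ℝ (Fin k))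
    (hu : Orthonormal ℝ u) (hv : Orthonormal ℝ v)
    (δ : Fin n → ℝ)
    (Y : Matrix (Fin m) (Fin k) ℝ)
    (hY : Y = ∑ j, δ j • Matrix.vecMulVec (u j) (v j)) :
    ∀ (w σ : Fin n → ℝ),
      (1/2) * frobSq (Y - ∑ j, σ j • Matrix.vecMulVec (u j) (v j)) + ∑ j, w j * σ j
        = ∑ j, ((1/2) * (δ j - σ j)^2 + w j * σ j) := by
  intro w σ
  have h : Y - ∑ j, σ j • Matrix.vecMulVec (u j) (v j)
      = ∑ j, (δ j - σ j) • Matrix.vecMulVec (u j) (v j) := by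
    simp_rw [hY, sub_smul, Finset.sum_sub_distrib]
  rw [h, frobSq_sum_smul_vecMulVec hu hv, Finset.mul_sum, Finset.sum_add_distrib]
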